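/- arXiv:1810.01126 — 8 statements merged into one kernel-verified Lean document; each statement's English description precedes it below -/
import Mathlib

section
/- There exists a constant C with 0 < C < 1 such that for every h > 0 and every four times continuously differentiable function u : ℝ → ℝ whose fourth derivative is bounded, the cubic B-spline quasi-interpolant Q₃u on the uniform grid {jh : j ∈ ℤ}, defined by Q₃u(x) = Σ_{k∈ℤ} (1/6)(−u((k−1)h) + 8u(kh) − u((k+1)h)) · B₃((x − (k−2)h)/h), satisfies sup_{x∈ℝ} |u(x) − Q₃u(x)| ≤ C · h⁴ · sup_{x∈ℝ} |u⁗(x)|. -/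
open MeasureTheory

/-- The cardinal B-spline of degree `d`: `B₀` is the indicator function of `[0,1)` and
`B_{d+1} = B_d * B₀` (convolution), so `B_d` is supported on `[0, d+1]`. -/
noncomputable def cardB : ℕ → ℝ → ℝ
  | 0 => Set.indicator (Set.Ico (0 : ℝ) 1) 1
  | (d + 1) => fun x => ∫ t : ℝ, cardB d (x - t) * cardB 0 t

/-- The cubic B-spline quasi-interpolant of `u` on the uniform grid `{jh : j ∈ ℤ}`. -/
noncomputable def Q3 (h : ℝ) (u : ℝ → ℝ) (x : ℝ) : ℝ :=
  ∑' k : ℤ, (1 / 6 : ℝ) * (-(u (((k : ℝ) - 1) * h)) + 8 * u ((k : ℝ) * h)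
      - u (((k : ℝ) + 1) * h)) * cardB 3 ((x - ((k : ℝ) - 2) * h) / h)

lemma cb_rec (d : ℕ) (x : ℝ) : cardB (d + 1) x = ∫ y in (x - 1)..x, cardB d y := by
  have h1 : cardB (d + 1) x = ∫ t : ℝ, (Set.Ico (0:ℝ) 1).indicator (fun t => cardB d (x - t)) t := by
    rw [cardB]
    refine integral_congr_ae (Filter.Eventually.of_forall fun t => ?_)
    by_cases ht : t ∈ Set.Ico (0:ℝ) 1
    · simp [cardB, ht]
    · simp [cardB, ht]
  rw [h1, integral_indicator measurableSet_Ico, integral_Ico_eq_integral_Ioc,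
    ← intervalIntegral.integral_of_le zero_le_one, intervalIntegral.integral_comp_sub_left]
  simp

lemma cb_tp_deriv (n : ℕ) (y : ℝ) :
    HasDerivAt (fun y : ℝ => (max y 0) ^ (n + 2) / (n + 2)) ((max y 0) ^ (n + 1)) y := by
  have hn : (n : ℝ) + 2 ≠ 0 := by positivity
  rcases lt_trichotomy y 0 with hy | hy | hy
  · have : (fun y : ℝ => (max y 0) ^ (n + 2) / ((n:ℝ) + 2)) =ᶠ[nhds y] fun _ => 0 := by
      filter_upwards [Iio_mem_nhds hy] with z hz
      simp only [Set.mem_Iio] at hz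
      simp [max_eq_right hz.le]
    rw [max_eq_right hy.le]
    simpa using (hasDerivAt_const y (0:ℝ)).congr_of_eventuallyEq this
  · subst hy
    have : HasDerivAt (fun y : ℝ => (max y 0) ^ (n + 2) / ((n:ℝ) + 2)) 0 0 := by
      rw [hasDerivAt_iff_isLittleO_nhds_zero]
      have hO : (fun h : ℝ => (max (0 + h) 0) ^ (n + 2) / ((n:ℝ) + 2) - (max 0 0) ^ (n + 2) / ((n:ℝ) + 2) - h • (0:ℝ)) =O[nhds 0] (fun h : ℝ => h ^ (n + 2)) := by
        apply Asymptotics.IsBigO.of_bound 1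
        filter_upwards with h
        have h2 : (max h 0) ^ (n + 2) ≤ |h| ^ (n + 2) := by
          gcongr
          exact max_le (le_abs_self h) (abs_nonneg h)
        have h3 : 0 ≤ (max h 0) ^ (n + 2) := by positivity
        simp only [zero_add, max_self, smul_zero, sub_zero, Real.norm_eq_abs, abs_pow, one_mul]
        rw [zero_pow (by omega), zero_div, sub_zero, abs_div, abs_of_nonneg h3,
          abs_of_pos (by positivity : (0:ℝ) < n + 2)]
        refine le_trans (div_le_self h3 ?_) h2
        have : (0:ℝ) ≤ n := by positivity
        linarith
      exact hO.trans_isLittleO (by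
        simpa using Asymptotics.isLittleO_pow_id (𝕜 := ℝ) (n := n + 2) (by omega))
    simpa using this
  · have : (fun y : ℝ => (max y 0) ^ (n + 2) / ((n:ℝ) + 2)) =ᶠ[nhds y] fun y => y ^ (n + 2) / ((n:ℝ) + 2) := by
      filter_upwards [Ioi_mem_nhds hy] with z hz
      simp only [Set.mem_Ioi] at hz
      simp [max_eq_left hz.le]
    rw [max_eq_left hy.le]
    refine HasDerivAt.congr_of_eventuallyEq ?_ this
    have := (hasDerivAt_pow (n + 2) y).div_const ((n:ℝ) + 2)
    have e : (((n + 2 : ℕ) : ℝ) * y ^ (n + 2 - 1) / ((n:ℝ) + 2)) = y ^ (n + 1) := by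
      rw [div_eq_iff hn, show n + 2 - 1 = n + 1 by omega]
      push_cast
      ring
    rwa [e] at this

lemma cb_tp_int (n : ℕ) (x c : ℝ) :
    ∫ y in (x - 1)..x, (max (y - c) 0) ^ (n + 1)
      = (max (x - c) 0) ^ (n + 2) / (n + 2) - (max (x - (c + 1)) 0) ^ (n + 2) / (n + 2) := by
  rw [intervalIntegral.integral_comp_sub_right (fun y => (max y 0) ^ (n + 1)) c,
    intervalIntegral.integral_eq_sub_of_hasDerivAt (fun y _ => cb_tp_deriv n y)
      (Continuous.intervalIntegrable (by fun_prop) _ _)]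
  rw [show x - 1 - c = x - (c + 1) by ring]

lemma cb_one (x : ℝ) : cardB 1 x = max x 0 - 2 * max (x - 1) 0 + max (x - 2) 0 := by
  rw [cb_rec 0]
  have := intervalIntegral.integral_eq_sub_of_hasDeriv_right (a := x - 1) (b := x)
    (f := fun y => max y 0 - max (y - 1) 0) (f' := cardB 0) (by fun_prop) ?_ ?_
  · rw [this, show x - 1 - 1 = x - 2 by ring]
    ring
  · intro y _
    have key : ∀ g : ℝ → ℝ, (∀ᶠ z in nhdsWithin y (Set.Ioi y), max z 0 - max (z - 1) 0 = g z) →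
        max y 0 - max (y - 1) 0 = g y → ∀ g', HasDerivAt g g' y →
        HasDerivWithinAt (fun y : ℝ => max y 0 - max (y - 1) 0) g' (Set.Ioi y) y :=
      fun g h1 h2 g' h3 => h3.hasDerivWithinAt.congr_of_eventuallyEq h1 h2
    rcases lt_or_ge y 0 with h0 | h0
    · have : cardB 0 y = 0 := by simp [cardB, h0]
      rw [this]
      refine key (fun _ => 0) ?_ ?_ _ (hasDerivAt_const _ _)
      · filter_upwards [mem_nhdsWithin_of_mem_nhds (Iio_mem_nhds h0)] with z hz
        simp only [Set.mem_Iio] at hz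
        rw [max_eq_right hz.le, max_eq_right (by linarith)]; simp
      · rw [max_eq_right h0.le, max_eq_right (by linarith)]; simp
    rcases lt_or_ge y 1 with h1 | h1
    · have : cardB 0 y = 1 := by simp [cardB, h0, h1]
      rw [this]
      refine key (fun z => z) ?_ ?_ _ (hasDerivAt_id _)
      · filter_upwards [mem_nhdsWithin_of_mem_nhds (Iio_mem_nhds h1), self_mem_nhdsWithin] with z hz hz2
        simp only [Set.mem_Iio, Set.mem_Ioi] at hz hz2
        rw [max_eq_left (by linarith), max_eq_right (by linarith)]; simp
      · rw [max_eq_left (by linarith), max_eq_right (by linarith)]; simp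
    · have : cardB 0 y = 0 := by simp [cardB, h1]
      rw [this]
      refine key (fun _ => 1) ?_ ?_ _ (hasDerivAt_const _ _)
      · filter_upwards [self_mem_nhdsWithin] with z hz2
        simp only [Set.mem_Ioi] at hz2
        rw [max_eq_left (by linarith), max_eq_left (by linarith)]; simp
      · rw [max_eq_left (by linarith), max_eq_left (by linarith)]; simp
  · have : Integrable (cardB 0) volume := by
      rw [cardB, integrable_indicator_iff measurableSet_Ico]
      exact integrableOn_const (by simp)
    exact this.intervalIntegrable

lemma cb_two (x : ℝ) : cardB 2 x = (1 / 2) * ((max x 0) ^ 2 - 3 * (max (x - 1) 0) ^ 2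
    + 3 * (max (x - 2) 0) ^ 2 - (max (x - 3) 0) ^ 2) := by
  rw [cb_rec 1]
  have h : ∀ y, cardB 1 y = (max (y - 0) 0) ^ (0 + 1) - 2 * (max (y - 1) 0) ^ (0 + 1)
      + (max (y - 2) 0) ^ (0 + 1) := by
    intro y; rw [cb_one]; simp
  simp_rw [h]
  rw [intervalIntegral.integral_add, intervalIntegral.integral_sub,
    intervalIntegral.integral_const_mul, cb_tp_int, cb_tp_int, cb_tp_int]
  · norm_num
    ring
  all_goals exact Continuous.intervalIntegrable (by fun_prop) _ _

lemma cb_three (x : ℝ) : cardB 3 x = (1 / 6) * ((max x 0) ^ 3 - 4 * (max (x - 1) 0) ^ 3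
    + 6 * (max (x - 2) 0) ^ 3 - 4 * (max (x - 3) 0) ^ 3 + (max (x - 4) 0) ^ 3) := by
  rw [cb_rec 2]
  have h : ∀ y, cardB 2 y = (1 / 2) * ((max (y - 0) 0) ^ (1 + 1) - 3 * (max (y - 1) 0) ^ (1 + 1)
      + 3 * (max (y - 2) 0) ^ (1 + 1) - (max (y - 3) 0) ^ (1 + 1)) := by
    intro y; rw [cb_two]; simp
  simp_rw [h]
  rw [intervalIntegral.integral_const_mul, intervalIntegral.integral_sub,
    intervalIntegral.integral_add, intervalIntegral.integral_sub,
    intervalIntegral.integral_const_mul, intervalIntegral.integral_const_mul,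
    cb_tp_int, cb_tp_int, cb_tp_int, cb_tp_int]
  · norm_num
    ring
  all_goals exact Continuous.intervalIntegrable (by fun_prop) _ _

lemma cb_zero_left (y : ℝ) (hy : y ≤ 0) : cardB 3 y = 0 := by
  rw [cb_three, max_eq_right hy, max_eq_right (by linarith), max_eq_right (by linarith),
    max_eq_right (by linarith), max_eq_right (by linarith)]
  norm_num

lemma cb_zero_right (y : ℝ) (hy : 4 ≤ y) : cardB 3 y = 0 := by
  rw [cb_three, max_eq_left (by linarith), max_eq_left (by linarith), max_eq_left (by linarith),
    max_eq_left (by linarith), max_eq_left (by linarith)]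
  ring

lemma cb_val0 (s : ℝ) (h0 : 0 ≤ s) (h1 : s ≤ 1) : cardB 3 s = s ^ 3 / 6 := by
  rw [cb_three, max_eq_left (by linarith), max_eq_right (by linarith), max_eq_right (by linarith),
    max_eq_right (by linarith), max_eq_right (by linarith)]
  ring

lemma cb_val1 (s : ℝ) (h0 : 0 ≤ s) (h1 : s ≤ 1) :
    cardB 3 (s + 1) = (1 + 3 * s + 3 * s ^ 2 - 3 * s ^ 3) / 6 := by
  rw [cb_three, max_eq_left (by linarith), max_eq_left (by linarith), max_eq_right (by linarith),
    max_eq_right (by linarith), max_eq_right (by linarith)]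
  ring

lemma cb_val2 (s : ℝ) (h0 : 0 ≤ s) (h1 : s ≤ 1) :
    cardB 3 (s + 2) = (4 - 6 * s ^ 2 + 3 * s ^ 3) / 6 := by
  rw [cb_three, max_eq_left (by linarith), max_eq_left (by linarith), max_eq_left (by linarith),
    max_eq_right (by linarith), max_eq_right (by linarith)]
  ring

lemma cb_val3 (s : ℝ) (h0 : 0 ≤ s) (h1 : s ≤ 1) :
    cardB 3 (s + 3) = (1 - s) ^ 3 / 6 := by
  rw [cb_three, max_eq_left (by linarith), max_eq_left (by linarith), max_eq_left (by linarith),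
    max_eq_left (by linarith), max_eq_right (by linarith)]
  ring

lemma cb_taylor (u : ℝ → ℝ) (hu : ContDiff ℝ 4 u) (M : ℝ) (hM : ∀ x, |iteratedDeriv 4 u x| ≤ M)
    (x : ℝ) : ∃ a b c : ℝ, ∀ y, |u y - (u x + a * (y - x) + b * (y - x) ^ 2 + c * (y - x) ^ 3)|
      ≤ M * (y - x) ^ 4 / 24 := by
  refine ⟨iteratedDeriv 1 u x, iteratedDeriv 2 u x / 2, iteratedDeriv 3 u x / 6, fun y => ?_⟩
  by_cases hxy : x = y
  · subst hxy; simp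
  obtain ⟨z, -, hz⟩ := taylor_mean_remainder_lagrange_iteratedDeriv (n := 3) hxy
    (f := u) (by norm_num; exact hu.contDiffOn)
  have hw : ∀ k : ℕ, k ≤ 4 → iteratedDerivWithin k u (Set.uIcc x y) x = iteratedDeriv k u x := by
    intro k hk
    refine iteratedDerivWithin_eq_iteratedDeriv (uniqueDiffOn_uIcc hxy) ?_ Set.left_mem_uIcc
    exact (hu.of_le (by exact_mod_cast hk)).contDiffAt
  have e : u y - (u x + iteratedDeriv 1 u x * (y - x) + iteratedDeriv 2 u x / 2 * (y - x) ^ 2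
      + iteratedDeriv 3 u x / 6 * (y - x) ^ 3) = iteratedDeriv 4 u z * (y - x) ^ 4 / 24 := by
    have h24 : ((Nat.factorial (3 + 1) : ℕ) : ℝ) = 24 := by norm_num [Nat.factorial]
    rw [h24] at hz
    rw [← hz, taylor_within_apply]
    simp only [Finset.sum_range_succ, Finset.sum_range_zero, hw 0 (by norm_num),
      hw 1 (by norm_num), hw 2 (by norm_num), hw 3 (by norm_num), iteratedDeriv_zero, smul_eq_mul]
    norm_num [Nat.factorial]
    ring
  rw [e, abs_div, abs_mul, abs_of_nonneg (by positivity : (0:ℝ) ≤ (y - x) ^ 4),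
    abs_of_pos (by norm_num : (0:ℝ) < 24)]
  gcongr
  exact hM z

lemma cb_Q3 (h : ℝ) (hh : 0 < h) (u : ℝ → ℝ) (n : ℤ) (s : ℝ) (h0 : 0 ≤ s) (h1 : s ≤ 1) :
    Q3 h u ((n + s) * h) =
      (1 / 6) * (-(u ((n - 2) * h)) + 8 * u ((n - 1) * h) - u (n * h)) * ((1 - s) ^ 3 / 6)
      + (1 / 6) * (-(u ((n - 1) * h)) + 8 * u (n * h) - u ((n + 1) * h))
          * ((4 - 6 * s ^ 2 + 3 * s ^ 3) / 6)
      + (1 / 6) * (-(u (n * h)) + 8 * u ((n + 1) * h) - u ((n + 2) * h))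
          * ((1 + 3 * s + 3 * s ^ 2 - 3 * s ^ 3) / 6)
      + (1 / 6) * (-(u ((n + 1) * h)) + 8 * u ((n + 2) * h) - u ((n + 3) * h))
          * (s ^ 3 / 6) := by
  have harg : ∀ k : ℤ, (((n:ℝ) + s) * h - ((k : ℝ) - 2) * h) / h = s + (n - k + 2) := by
    intro k; field_simp; ring
  unfold Q3
  simp_rw [harg]
  rw [tsum_eq_sum (s := {n - 1, n, n + 1, n + 2})]
  · rw [Finset.sum_insert (by simp; omega), Finset.sum_insert (by simp), Finset.sum_insert (by simp),
      Finset.sum_singleton]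
    push_cast
    rw [show s + ((n:ℝ) - (n - 1) + 2) = s + 3 by ring, show s + ((n:ℝ) - n + 2) = s + 2 by ring,
      show s + ((n:ℝ) - (n + 1) + 2) = s + 1 by ring, show s + ((n:ℝ) - (n + 2) + 2) = s by ring,
      cb_val0 s h0 h1, cb_val1 s h0 h1, cb_val2 s h0 h1, cb_val3 s h0 h1,
      show (n:ℝ) - 1 - 1 = n - 2 by ring, show (n:ℝ) - 1 + 1 = n by ring,
      show (n:ℝ) + 1 - 1 = n by ring, show (n:ℝ) + 1 + 1 = n + 2 by ring,
      show (n:ℝ) + 2 - 1 = n + 1 by ring, show (n:ℝ) + 2 + 1 = n + 3 by ring]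
    ring
  · intro k hk
    simp only [Finset.mem_insert, Finset.mem_singleton, not_or] at hk
    have : k ≤ n - 2 ∨ n + 3 ≤ k := by omega
    rcases this with hk | hk
    · have : (k:ℝ) ≤ n - 2 := by exact_mod_cast hk
      rw [cb_zero_right _ (by linarith), mul_zero]
    · have : (n:ℝ) + 3 ≤ k := by exact_mod_cast hk
      rw [cb_zero_left _ (by linarith), mul_zero]

lemma cb_triple (p q r P Q R w W : ℝ) (hp : |p| ≤ P) (hq : |q| ≤ Q) (hr : |r| ≤ R)
    (hw0 : 0 ≤ w) (hw : w ≤ W) :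
    |(1 / 6) * (-p + 8 * q - r) * w| ≤ (1 / 6) * (P + 8 * Q + R) * W := by
  have h1 : |(1 / 6) * (-p + 8 * q - r)| ≤ (1 / 6) * (P + 8 * Q + R) := by
    rw [abs_le] at *
    constructor <;> linarith [hp.1, hp.2, hq.1, hq.2, hr.1, hr.2]
  rw [abs_mul, abs_of_nonneg hw0]
  exact mul_le_mul h1 hw hw0 ((abs_nonneg _).trans h1)

set_option maxHeartbeats 2000000 in
theorem cbsqi_error_bound :
    ∃ C : ℝ, 0 < C ∧ C < 1 ∧
      ∀ h : ℝ, 0 < h → ∀ u : ℝ → ℝ, ContDiff ℝ 4 u →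
        (∃ M : ℝ, ∀ x : ℝ, |iteratedDeriv 4 u x| ≤ M) →
        ∀ x : ℝ, |u x - Q3 h u x| ≤ C * h ^ 4 * ⨆ y : ℝ, |iteratedDeriv 4 u y| := by
  refine ⟨9 / 10, by norm_num, by norm_num, ?_⟩
  rintro h hh u hu ⟨M', hM'⟩ x
  have hM : ∀ y, |iteratedDeriv 4 u y| ≤ ⨆ y : ℝ, |iteratedDeriv 4 u y| := fun y =>
    le_ciSup (f := fun y => |iteratedDeriv 4 u y|) ⟨M', by rintro _ ⟨z, rfl⟩; exact hM' z⟩ y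
  generalize (⨆ y : ℝ, |iteratedDeriv 4 u y|) = M at hM
  have hM0 : 0 ≤ M := (abs_nonneg _).trans (hM 0)
  obtain ⟨n, s, h0, h1, rfl⟩ : ∃ (n : ℤ) (s : ℝ), 0 ≤ s ∧ s ≤ 1 ∧ x = (n + s) * h := by
    refine ⟨⌊x / h⌋, Int.fract (x / h), Int.fract_nonneg _, (Int.fract_lt_one _).le, ?_⟩
    rw [Int.floor_add_fract]
    field_simp
  obtain ⟨a, b, c, ht⟩ := cb_taylor u hu M hM ((n + s) * h)
  rw [cb_Q3 h hh u n s h0 h1]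
  set v := u ((n + s) * h) with hv
  have key : ∀ j D : ℝ, (j - s) ^ 4 ≤ D → ∀ y, y = (n + j) * h →
      ∃ r, u y = v + a * ((j - s) * h) + b * ((j - s) * h) ^ 2 + c * ((j - s) * h) ^ 3 + r ∧
        |r| ≤ M * h ^ 4 * D / 24 := by
    rintro j D hD y rfl
    refine ⟨_, (add_sub_cancel _ _).symm, ?_⟩
    have := ht ((n + j) * h)
    rw [show ((n:ℝ) + j) * h - (n + s) * h = (j - s) * h by ring] at this
    refine this.trans ?_
    rw [mul_pow, show M * ((j - s) ^ 4 * h ^ 4) = M * h ^ 4 * (j - s) ^ 4 by ring]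
    gcongr
  have pw : ∀ t B : ℝ, |t| ≤ B → t ^ 4 ≤ B ^ 4 := by
    intro t B hB
    have := pow_le_pow_left₀ (abs_nonneg t) hB 4
    rwa [Even.pow_abs (by decide)] at this
  obtain ⟨r1, e1, b1⟩ := key (-2) (3 ^ 4) (pw _ _ (abs_le.2 ⟨by linarith, by linarith⟩)) ((n - 2) * h) (by ring)
  obtain ⟨r2, e2, b2⟩ := key (-1) (2 ^ 4) (pw _ _ (abs_le.2 ⟨by linarith, by linarith⟩)) ((n - 1) * h) (by ring)
  obtain ⟨r3, e3, b3⟩ := key 0 (1 ^ 4) (pw _ _ (abs_le.2 ⟨by linarith, by linarith⟩)) (n * h) (by ring)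
  obtain ⟨r4, e4, b4⟩ := key 1 (1 ^ 4) (pw _ _ (abs_le.2 ⟨by linarith, by linarith⟩)) ((n + 1) * h) (by ring)
  obtain ⟨r5, e5, b5⟩ := key 2 (2 ^ 4) (pw _ _ (abs_le.2 ⟨by linarith, by linarith⟩)) ((n + 2) * h) (by ring)
  obtain ⟨r6, e6, b6⟩ := key 3 (3 ^ 4) (pw _ _ (abs_le.2 ⟨by linarith, by linarith⟩)) ((n + 3) * h) (by ring)
  rw [e1, e2, e3, e4, e5, e6]
  have s3 : s ^ 3 ≤ 1 := pow_le_one₀ h0 h1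
  have s3' : 0 ≤ s ^ 3 := by positivity
  have s2 : s ^ 3 ≤ s ^ 2 := pow_le_pow_of_le_one h0 h1 (by norm_num)
  have s21 : s ^ 2 ≤ s := by nlinarith
  have q3 : (1 - s) ^ 3 ≤ 1 := pow_le_one₀ (by linarith) (by linarith)
  have q3' : 0 ≤ (1 - s) ^ 3 := pow_nonneg (by linarith) 3
  have t1 := cb_triple r1 r2 r3 _ _ _ ((1 - s) ^ 3 / 6) (1 / 6) b1 b2 b3 (by linarith) (by linarith)
  have t2 := cb_triple r2 r3 r4 _ _ _ ((4 - 6 * s ^ 2 + 3 * s ^ 3) / 6) (2 / 3) b2 b3 b4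
    (by nlinarith [mul_nonneg h0 (sub_nonneg.2 h1)]) (by nlinarith [sq_nonneg s])
  have t3 := cb_triple r3 r4 r5 _ _ _ ((1 + 3 * s + 3 * s ^ 2 - 3 * s ^ 3) / 6) (2 / 3) b3 b4 b5
    (by linarith) (by nlinarith [sq_nonneg (1 - s)])
  have t4 := cb_triple r4 r5 r6 _ _ _ (s ^ 3 / 6) (1 / 6) b4 b5 b6 (by linarith) (by linarith)
  have hMh : 0 ≤ M * h ^ 4 := by positivity
  have fin : ∀ E T1 T2 T3 T4 K1 K2 K3 K4 K : ℝ, E = -(T1 + T2 + T3 + T4) → |T1| ≤ K1 → |T2| ≤ K2 →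
      |T3| ≤ K3 → |T4| ≤ K4 → K1 + K2 + K3 + K4 ≤ K → |E| ≤ K := by
    intro E T1 T2 T3 T4 K1 K2 K3 K4 K hE a1 a2 a3 a4 hK
    rw [abs_le] at *
    constructor <;> linarith [a1.1, a1.2, a2.1, a2.2, a3.1, a3.2, a4.1, a4.2]
  refine fin _ _ _ _ _ _ _ _ _ _ ?_ t1 t2 t3 t4 ?_
  · ring
  · nlinarith [hMh]
end

section
/- There exists a constant C with 0 < C < 1 such that for every h > 0 and every six times continuously differentiable function u : ℝ → ℝ whose sixth derivative is bounded, the quintic B-spline quasi-interpolant Q₅u on the uniform grid {jh : j ∈ ℤ}, defined by Q₅u(x) = Σ_{k∈ℤ} [ (13/240)(u((k−2)h) + u((k+2)h)) − (7/15)(u((k−1)h) + u((k+1)h)) + (73/40)u(kh) ] · B₅((x − (k−3)h)/h), satisfies sup_{x∈ℝ} |u(x) − Q₅u(x)| ≤ C · h⁶ · sup_{x∈ℝ} |u⁽⁶⁾(x)|. -/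
open MeasureTheory

/-- The quintic B-spline quasi-interpolant of `u` on the uniform grid `{jh : j ∈ ℤ}`. -/
noncomputable def Q5 (h : ℝ) (u : ℝ → ℝ) (x : ℝ) : ℝ :=
  ∑' k : ℤ, ((13 / 240 : ℝ) * (u (((k : ℝ) - 2) * h) + u (((k : ℝ) + 2) * h))
      - (7 / 15) * (u (((k : ℝ) - 1) * h) + u (((k : ℝ) + 1) * h))
      + (73 / 40) * u ((k : ℝ) * h)) * cardB 5 ((x - ((k : ℝ) - 3) * h) / h)

noncomputable def GG (d : ℕ) (x : ℝ) : ℝ := if 0 ≤ x then x ^ d else 0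

lemma GG_mono (d : ℕ) : Monotone (GG d) := by
  intro x y hxy
  unfold GG
  split_ifs with h1 h2 h2
  · gcongr
  · exact absurd (h1.trans hxy) h2
  · positivity
  · exact le_rfl

lemma GG_succ_eq (d : ℕ) (x : ℝ) : GG (d+1) x = (max x 0) ^ (d+1) := by
  unfold GG
  split_ifs with h
  · rw [max_eq_left h]
  · rw [max_eq_right (by linarith)]; simp

lemma GG_cont (d : ℕ) : Continuous (GG (d+1)) := by
  have : GG (d+1) = fun x => (max x 0) ^ (d+1) := funext (GG_succ_eq d)
  rw [this]; fun_prop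

lemma GG_deriv (d : ℕ) (x : ℝ) :
    HasDerivWithinAt (GG (d+1)) (((d:ℝ)+1) * GG d x) (Set.Ioi x) x := by
  by_cases h : 0 ≤ x
  · have h1 : HasDerivWithinAt (fun y : ℝ => y ^ (d+1)) (((d:ℝ)+1) * x ^ d) (Set.Ioi x) x := by
      have := (hasDerivAt_pow (d+1) x).hasDerivWithinAt (s := Set.Ioi x)
      simpa using this
    have e : GG d x = x ^ d := by simp [GG, h]
    rw [e]
    refine h1.congr (fun y hy => ?_) ?_
    · have : 0 ≤ y := h.trans (le_of_lt hy)
      simp [GG, this]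
    · simp [GG, h]
  · have e : GG d x = 0 := by simp [GG, h]
    rw [e, mul_zero]
    have h1 : HasDerivAt (fun _ : ℝ => (0:ℝ)) 0 x := hasDerivAt_const _ _
    refine (h1.congr_of_eventuallyEq ?_).hasDerivWithinAt
    filter_upwards [Iio_mem_nhds (not_le.mp h)] with y hy
    have : ¬ (0 ≤ y) := not_le.mpr hy
    simp [GG, this]

lemma GG_int (d : ℕ) (a b : ℝ) : IntervalIntegrable (GG d) volume a b :=
  (GG_mono d).intervalIntegrable

lemma GG_integral (d : ℕ) (a b : ℝ) :
    ∫ s in a..b, GG d s = (GG (d+1) b - GG (d+1) a) / ((d:ℝ)+1) := by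
  have h := intervalIntegral.integral_eq_sub_of_hasDeriv_right (a := a) (b := b)
    (GG_cont d).continuousOn (fun x _ => GG_deriv d x) ((GG_int d a b).const_mul _)
  rw [intervalIntegral.integral_const_mul] at h
  have : ((d:ℝ)+1) ≠ 0 := by positivity
  field_simp
  linarith

lemma cardB_succ (d : ℕ) (x : ℝ) : cardB (d+1) x = ∫ s in (x-1)..x, cardB d s := by
  have h1 : cardB (d+1) x = ∫ t : ℝ, Set.indicator (Set.Ico (0:ℝ) 1) (fun t => cardB d (x-t)) t := by
    simp only [cardB]
    congr 1
    funext t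
    by_cases ht : t ∈ Set.Ico (0:ℝ) 1
    · simp [Set.indicator_of_mem ht]
    · simp [Set.indicator_of_notMem ht]
  rw [h1, integral_indicator measurableSet_Ico, integral_Ico_eq_integral_Ioc,
    ← intervalIntegral.integral_of_le zero_le_one,
    intervalIntegral.integral_comp_sub_left (fun s => cardB d s) x]
  simp

lemma cardB_nonneg (d : ℕ) : ∀ x, 0 ≤ cardB d x := by
  induction d with
  | zero => intro x; simp only [cardB]; exact Set.indicator_nonneg (fun _ _ => zero_le_one) x
  | succ d ih =>
    intro x
    rw [cardB_succ]
    exact intervalIntegral.integral_nonneg (by linarith) (fun u _ => ih u)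

lemma step (d n : ℕ) (c : ℕ → ℝ)
    (hB : ∀ x, cardB d x = ∑ j ∈ Finset.range n, c j * GG d (x - j)) (x : ℝ) :
    cardB (d+1) x = ∑ j ∈ Finset.range n,
      c j * ((GG (d+1) (x - j) - GG (d+1) (x - (j+1))) / ((d:ℝ)+1)) := by
  rw [cardB_succ]
  simp_rw [hB]
  rw [intervalIntegral.integral_finset_sum]
  · refine Finset.sum_congr rfl fun j _ => ?_
    rw [intervalIntegral.integral_const_mul,
      intervalIntegral.integral_comp_sub_right (fun s => GG d s), GG_integral]
    ring_nf
  · intro j _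
    refine IntervalIntegrable.const_mul ?_ _
    have : Monotone (fun s : ℝ => GG d (s - j)) := fun a b hab => GG_mono d (by simpa using hab)
    exact this.intervalIntegrable

noncomputable def cc (d : ℕ) : ℕ → ℝ := fun j => (-1)^j * ((d+1).choose j) / (d.factorial)

lemma B0 (x : ℝ) : cardB 0 x = ∑ j ∈ Finset.range 2, cc 0 j * GG 0 (x - j) := by
  simp only [cardB, Set.indicator, Set.mem_Ico, GG, cc, Finset.sum_range_succ]
  by_cases h1 : 0 ≤ x <;> by_cases h2 : 1 ≤ x
  · simp [h1, h2, not_lt.mpr h2]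
  · simp [h1, h2, not_le.mp h2]
  · exfalso; linarith
  · simp [h1, h2]

lemma B1 (x : ℝ) : cardB 1 x = ∑ j ∈ Finset.range 3, cc 1 j * GG 1 (x - j) := by
  rw [step 0 2 (cc 0) B0]
  simp [Finset.sum_range_succ, cc, Nat.choose, Nat.factorial]
  ring_nf

lemma B2 (x : ℝ) : cardB 2 x = ∑ j ∈ Finset.range 4, cc 2 j * GG 2 (x - j) := by
  rw [step 1 3 (cc 1) B1]
  simp [Finset.sum_range_succ, cc, Nat.choose, Nat.factorial]
  ring_nf

lemma B3 (x : ℝ) : cardB 3 x = ∑ j ∈ Finset.range 5, cc 3 j * GG 3 (x - j) := by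
  rw [step 2 4 (cc 2) B2]
  simp [Finset.sum_range_succ, cc, Nat.choose, Nat.factorial]
  ring_nf

lemma B4 (x : ℝ) : cardB 4 x = ∑ j ∈ Finset.range 6, cc 4 j * GG 4 (x - j) := by
  rw [step 3 5 (cc 3) B3]
  simp [Finset.sum_range_succ, cc, Nat.choose, Nat.factorial]
  ring_nf

lemma B5 (x : ℝ) : cardB 5 x = ∑ j ∈ Finset.range 7, cc 5 j * GG 5 (x - j) := by
  rw [step 4 6 (cc 4) B4]
  simp [Finset.sum_range_succ, cc, Nat.choose, Nat.factorial]
  ring_nf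

lemma B5_explicit (x : ℝ) : cardB 5 x = (GG 5 x - 6 * GG 5 (x-1) + 15 * GG 5 (x-2)
    - 20 * GG 5 (x-3) + 15 * GG 5 (x-4) - 6 * GG 5 (x-5) + GG 5 (x-6)) / 120 := by
  rw [B5]
  simp [Finset.sum_range_succ, cc, Nat.choose, Nat.factorial]
  ring

lemma GG_pos (d : ℕ) {x : ℝ} (h : 0 ≤ x) : GG d x = x ^ d := if_pos h
lemma GG_neg (d : ℕ) {x : ℝ} (h : x < 0) : GG d x = 0 := if_neg (not_le.mpr h)

lemma B5_left {x : ℝ} (h : x < 0) : cardB 5 x = 0 := by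
  rw [B5_explicit, GG_neg, GG_neg, GG_neg, GG_neg, GG_neg, GG_neg, GG_neg] <;> first | linarith | norm_num

lemma B5_right {x : ℝ} (h : 6 ≤ x) : cardB 5 x = 0 := by
  rw [B5_explicit, GG_pos, GG_pos, GG_pos, GG_pos, GG_pos, GG_pos, GG_pos] <;> first | linarith | ring

lemma b0 {f : ℝ} (h0 : 0 ≤ f) (h1 : f < 1) : cardB 5 (f + 0) = ((1) * (f + 0 - 0) ^ 5) / 120 := by
  rw [B5_explicit, GG_pos 5 (by linarith), GG_neg 5 (by linarith), GG_neg 5 (by linarith), GG_neg 5 (by linarith), GG_neg 5 (by linarith), GG_neg 5 (by linarith), GG_neg 5 (by linarith)]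
  ring

lemma b1 {f : ℝ} (h0 : 0 ≤ f) (h1 : f < 1) : cardB 5 (f + 1) = ((1) * (f + 1 - 0) ^ 5 + (-6) * (f + 1 - 1) ^ 5) / 120 := by
  rw [B5_explicit, GG_pos 5 (by linarith), GG_pos 5 (by linarith), GG_neg 5 (by linarith), GG_neg 5 (by linarith), GG_neg 5 (by linarith), GG_neg 5 (by linarith), GG_neg 5 (by linarith)]
  ring

lemma b2 {f : ℝ} (h0 : 0 ≤ f) (h1 : f < 1) : cardB 5 (f + 2) = ((1) * (f + 2 - 0) ^ 5 + (-6) * (f + 2 - 1) ^ 5 + (15) * (f + 2 - 2) ^ 5) / 120 := by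
  rw [B5_explicit, GG_pos 5 (by linarith), GG_pos 5 (by linarith), GG_pos 5 (by linarith), GG_neg 5 (by linarith), GG_neg 5 (by linarith), GG_neg 5 (by linarith), GG_neg 5 (by linarith)]
  ring

lemma b3 {f : ℝ} (h0 : 0 ≤ f) (h1 : f < 1) : cardB 5 (f + 3) = ((1) * (f + 3 - 0) ^ 5 + (-6) * (f + 3 - 1) ^ 5 + (15) * (f + 3 - 2) ^ 5 + (-20) * (f + 3 - 3) ^ 5) / 120 := by
  rw [B5_explicit, GG_pos 5 (by linarith), GG_pos 5 (by linarith), GG_pos 5 (by linarith), GG_pos 5 (by linarith), GG_neg 5 (by linarith), GG_neg 5 (by linarith), GG_neg 5 (by linarith)]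
  ring

lemma b4 {f : ℝ} (h0 : 0 ≤ f) (h1 : f < 1) : cardB 5 (f + 4) = ((1) * (f + 4 - 0) ^ 5 + (-6) * (f + 4 - 1) ^ 5 + (15) * (f + 4 - 2) ^ 5 + (-20) * (f + 4 - 3) ^ 5 + (15) * (f + 4 - 4) ^ 5) / 120 := by
  rw [B5_explicit, GG_pos 5 (by linarith), GG_pos 5 (by linarith), GG_pos 5 (by linarith), GG_pos 5 (by linarith), GG_pos 5 (by linarith), GG_neg 5 (by linarith), GG_neg 5 (by linarith)]
  ring

lemma b5 {f : ℝ} (h0 : 0 ≤ f) (h1 : f < 1) : cardB 5 (f + 5) = ((1) * (f + 5 - 0) ^ 5 + (-6) * (f + 5 - 1) ^ 5 + (15) * (f + 5 - 2) ^ 5 + (-20) * (f + 5 - 3) ^ 5 + (15) * (f + 5 - 4) ^ 5 + (-6) * (f + 5 - 5) ^ 5) / 120 := by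
  rw [B5_explicit, GG_pos 5 (by linarith), GG_pos 5 (by linarith), GG_pos 5 (by linarith), GG_pos 5 (by linarith), GG_pos 5 (by linarith), GG_pos 5 (by linarith), GG_neg 5 (by linarith)]
  ring

lemma core (g : ℝ → ℝ) (c0 c1 c2 c3 c4 c5 K f : ℝ) (hK : 0 ≤ K)
    (hg : ∀ t, |g t - (c0 + c1*t + c2*t^2 + c3*t^3 + c4*t^4 + c5*t^5)| ≤ K * t^6)
    (h0 : 0 ≤ f) (h1 : f < 1) :
    |c0 - ∑ i ∈ Finset.range 6, ((13 / 240 : ℝ) * (g (3 - i - f - 2) + g (3 - i - f + 2))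
      - (7 / 15) * (g (3 - i - f - 1) + g (3 - i - f + 1))
      + (73 / 40) * g (3 - i - f)) * cardB 5 (f + i)| ≤ K * 360 := by
  obtain ⟨R, hR⟩ : ∃ R : ℝ → ℝ, R = fun t => g t - (c0 + c1*t + c2*t^2 + c3*t^3 + c4*t^4 + c5*t^5) :=
    ⟨_, rfl⟩
  have hgR : ∀ t, g t = (c0 + c1*t + c2*t^2 + c3*t^3 + c4*t^4 + c5*t^5) + R t := by
    intro t; rw [hR]; ring
  have hRb : ∀ t, |R t| ≤ K * t^6 := by
    intro t; rw [hR]; exact hg t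
  have key : c0 - ∑ i ∈ Finset.range 6, ((13 / 240 : ℝ) * (g (3 - i - f - 2) + g (3 - i - f + 2))
      - (7 / 15) * (g (3 - i - f - 1) + g (3 - i - f + 1))
      + (73 / 40) * g (3 - i - f)) * cardB 5 (f + i)
      = - ∑ i ∈ Finset.range 6, ((13 / 240 : ℝ) * (R (3 - i - f - 2) + R (3 - i - f + 2))
      - (7 / 15) * (R (3 - i - f - 1) + R (3 - i - f + 1))
      + (73 / 40) * R (3 - i - f)) * cardB 5 (f + i) := by
    have hP : ∑ i ∈ Finset.range 6, (fun g : ℝ → ℝ => (13 / 240 : ℝ) * (g (3 - i - f - 2) + g (3 - i - f + 2))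
      - (7 / 15) * (g (3 - i - f - 1) + g (3 - i - f + 1))
      + (73 / 40) * g (3 - i - f)) (fun t => c0 + c1*t + c2*t^2 + c3*t^3 + c4*t^4 + c5*t^5)
        * cardB 5 (f + i) = c0 := by
      simp only [Finset.sum_range_succ, Finset.sum_range_zero]
      have e0 := b0 h0 h1
      have e1 := b1 h0 h1
      have e2 := b2 h0 h1
      have e3 := b3 h0 h1
      have e4 := b4 h0 h1
      have e5 := b5 h0 h1
      push_cast
      rw [e0, e1, e2, e3, e4, e5]
      ring
    nth_rewrite 1 [← hP]
    rw [← Finset.sum_sub_distrib, ← Finset.sum_neg_distrib]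
    refine Finset.sum_congr rfl fun i _ => ?_
    simp only [hgR]
    ring
  rw [key, abs_neg]
  have bd : ∀ t, |(13 / 240 : ℝ) * (R (t - 2) + R (t + 2))
      - (7 / 15) * (R (t - 1) + R (t + 1)) + (73 / 40) * R t| ≤
      K * ((13 / 240 : ℝ) * ((t - 2)^6 + (t + 2)^6)
      + (7 / 15) * ((t - 1)^6 + (t + 1)^6) + (73 / 40) * t^6) := by
    intro t
    have a1 := abs_le.mp (hRb (t-2))
    have a2 := abs_le.mp (hRb (t+2))
    have a3 := abs_le.mp (hRb (t-1))
    have a4 := abs_le.mp (hRb (t+1))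
    have a5 := abs_le.mp (hRb t)
    rw [abs_le]
    constructor <;> linarith
  calc _ ≤ ∑ i ∈ Finset.range 6, K * ((13 / 240 : ℝ) * ((3 - i - f - 2)^6 + (3 - i - f + 2)^6)
      + (7 / 15) * ((3 - i - f - 1)^6 + (3 - i - f + 1)^6) + (73 / 40) * (3 - i - f)^6)
        * cardB 5 (f + i) := by
        refine (Finset.abs_sum_le_sum_abs _ _).trans (Finset.sum_le_sum fun i _ => ?_)
        rw [abs_mul, abs_of_nonneg (cardB_nonneg 5 _)]
        exact mul_le_mul_of_nonneg_right (bd _) (cardB_nonneg 5 _)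
    _ = K * ∑ i ∈ Finset.range 6, ((13 / 240 : ℝ) * ((3 - i - f - 2)^6 + (3 - i - f + 2)^6)
      + (7 / 15) * ((3 - i - f - 1)^6 + (3 - i - f + 1)^6) + (73 / 40) * (3 - i - f)^6)
        * cardB 5 (f + i) := by
        rw [Finset.mul_sum]
        refine Finset.sum_congr rfl fun i _ => ?_
        ring
    _ ≤ K * 360 := by
        refine mul_le_mul_of_nonneg_left ?_ hK
        simp only [Finset.sum_range_succ, Finset.sum_range_zero]
        have e0 := b0 h0 h1
        have e1 := b1 h0 h1
        have e2 := b2 h0 h1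
        have e3 := b3 h0 h1
        have e4 := b4 h0 h1
        have e5 := b5 h0 h1
        push_cast
        rw [e0, e1, e2, e3, e4, e5]
        have p2 : f^2 ≤ 1 := pow_le_one₀ h0 h1.le
        have p3 : f^5 ≤ 1 := pow_le_one₀ h0 h1.le
        have p4 : 0 ≤ f^4 := by positivity
        have p6 : 0 ≤ f^6 := by positivity
        ring_nf
        linarith

lemma taylor6 (u : ℝ → ℝ) (hu : ContDiff ℝ 6 u) (M : ℝ) (hM : ∀ y, |iteratedDeriv 6 u y| ≤ M)
    (x y : ℝ) : |u y - (u x + iteratedDeriv 1 u x * (y-x) + iteratedDeriv 2 u x / 2 * (y-x)^2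
      + iteratedDeriv 3 u x / 6 * (y-x)^3 + iteratedDeriv 4 u x / 24 * (y-x)^4
      + iteratedDeriv 5 u x / 120 * (y-x)^5)| ≤ M / 720 * (y-x)^6 := by
  rcases eq_or_ne x y with rfl | hne
  · simp
  obtain ⟨z, _, hz⟩ := taylor_mean_remainder_lagrange_iteratedDeriv (n := 5) hne
    (f := u) (by norm_num; exact hu.contDiffOn)
  have hw : ∀ m : ℕ, m ≤ 6 → iteratedDerivWithin m u (Set.uIcc x y) x = iteratedDeriv m u x := by
    intro m hm
    refine iteratedDerivWithin_eq_iteratedDeriv (uniqueDiffOn_uIcc hne) ?_ Set.left_mem_uIcc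
    exact (hu.of_le (by exact_mod_cast hm)).contDiffAt
  rw [taylor_within_apply] at hz
  simp only [Finset.sum_range_succ, Finset.sum_range_zero] at hz
  rw [hw 0 (by norm_num), hw 1 (by norm_num), hw 2 (by norm_num), hw 3 (by norm_num),
    hw 4 (by norm_num), hw 5 (by norm_num)] at hz
  simp [Nat.factorial, -iteratedDeriv_one] at hz
  have e : u y - (u x + iteratedDeriv 1 u x * (y-x) + iteratedDeriv 2 u x / 2 * (y-x)^2
      + iteratedDeriv 3 u x / 6 * (y-x)^3 + iteratedDeriv 4 u x / 24 * (y-x)^4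
      + iteratedDeriv 5 u x / 120 * (y-x)^5) = iteratedDeriv 6 u z / 720 * (y-x)^6 := by
    linarith
  rw [e, abs_mul, abs_div]
  have h6 : |(y-x)^6| = (y-x)^6 := abs_of_nonneg (by positivity)
  rw [h6]
  have := hM z
  norm_num
  gcongr

lemma tsum_B5 (F : ℤ → ℝ) (y : ℝ) :
    ∑' k : ℤ, F k * cardB 5 (y - k + 3) =
      ∑ i ∈ Finset.range 6, F (⌊y⌋ + 3 - (i:ℤ)) * cardB 5 (Int.fract y + i) := by
  rw [tsum_eq_sum (s := (Finset.range 6).image (fun i : ℕ => ⌊y⌋ + 3 - (i:ℤ)))]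
  · rw [Finset.sum_image (by intro a _ b _ h; simpa using h)]
    refine Finset.sum_congr rfl fun i _ => ?_
    congr 2
    push_cast
    rw [← Int.self_sub_floor]; ring
  · intro k hk
    have hk' : k ≤ ⌊y⌋ - 3 ∨ ⌊y⌋ + 4 ≤ k := by
      by_contra hc
      push Not at hc
      apply hk
      rw [Finset.mem_image]
      refine ⟨(⌊y⌋ + 3 - k).toNat, ?_, ?_⟩
      · rw [Finset.mem_range]; omega
      · omega
    rcases hk' with h | h
    · rw [B5_right, mul_zero]
      have := Int.floor_le y
      have : (k:ℝ) ≤ ⌊y⌋ - 3 := by exact_mod_cast h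
      linarith
    · rw [B5_left, mul_zero]
      have := Int.lt_floor_add_one y
      have : (⌊y⌋:ℝ) + 4 ≤ k := by exact_mod_cast h
      linarith

theorem qnbsqi_error_bound :
    ∃ C : ℝ, 0 < C ∧ C < 1 ∧
      ∀ h : ℝ, 0 < h → ∀ u : ℝ → ℝ, ContDiff ℝ 6 u →
        (∃ M : ℝ, ∀ x : ℝ, |iteratedDeriv 6 u x| ≤ M) →
        ∀ x : ℝ, |u x - Q5 h u x| ≤ C * h ^ 6 * ⨆ y : ℝ, |iteratedDeriv 6 u y| := by
  refine ⟨1/2, by norm_num, by norm_num, ?_⟩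
  rintro h hh u hu ⟨M, hM⟩ x
  have hbdd : BddAbove (Set.range fun y : ℝ => |iteratedDeriv 6 u y|) := by
    refine ⟨M, ?_⟩
    rintro _ ⟨y, rfl⟩
    exact hM y
  obtain ⟨S, hS⟩ : ∃ S, S = ⨆ y : ℝ, |iteratedDeriv 6 u y| := ⟨_, rfl⟩
  have hSb : ∀ y, |iteratedDeriv 6 u y| ≤ S := fun y => hS ▸ le_ciSup hbdd y
  have hS0 : 0 ≤ S := (abs_nonneg _).trans (hSb 0)
  rw [← hS]
  have hQ : Q5 h u x = ∑ i ∈ Finset.range 6,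
      ((13 / 240 : ℝ) * (u (x + (3 - i - Int.fract (x/h) - 2) * h) + u (x + (3 - i - Int.fract (x/h) + 2) * h))
      - (7 / 15) * (u (x + (3 - i - Int.fract (x/h) - 1) * h) + u (x + (3 - i - Int.fract (x/h) + 1) * h))
      + (73 / 40) * u (x + (3 - i - Int.fract (x/h)) * h)) * cardB 5 (Int.fract (x/h) + i) := by
    have e : ∀ k : ℤ, (x - ((k : ℝ) - 3) * h) / h = x / h - k + 3 := by
      intro k; field_simp; ring
    unfold Q5
    simp_rw [e]
    rw [tsum_B5 (fun k : ℤ => ((13 / 240 : ℝ) * (u (((k : ℝ) - 2) * h) + u (((k : ℝ) + 2) * h))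
      - (7 / 15) * (u (((k : ℝ) - 1) * h) + u (((k : ℝ) + 1) * h))
      + (73 / 40) * u ((k : ℝ) * h)))]
    refine Finset.sum_congr rfl fun i _ => ?_
    have hx : ∀ a : ℝ, x + (3 - i - Int.fract (x/h) + a) * h = (⌊x/h⌋ + 3 - i + a) * h := by
      intro a
      rw [← Int.self_sub_floor]
      field_simp
      ring
    have h1 := hx (-2)
    have h2 := hx 2
    have h3 := hx (-1)
    have h4 := hx 1
    have h5 := hx 0
    simp only [← sub_eq_add_neg, add_zero] at h1 h2 h3 h4 h5
    rw [h1, h2, h3, h4, h5]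
    push_cast
    ring
  rw [hQ]
  have := core (fun t => u (x + t * h)) (u x) (iteratedDeriv 1 u x * h) (iteratedDeriv 2 u x / 2 * h^2)
    (iteratedDeriv 3 u x / 6 * h^3) (iteratedDeriv 4 u x / 24 * h^4) (iteratedDeriv 5 u x / 120 * h^5)
    (S / 720 * h^6) (Int.fract (x/h)) (by positivity) ?_ (Int.fract_nonneg _) (Int.fract_lt_one _)
  · refine this.trans (le_of_eq ?_)
    ring
  · intro t
    have ht := taylor6 u hu S hSb x (x + t * h)
    simp only [add_sub_cancel_left] at ht
    convert ht using 1
    · congr 1; ring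
    · ring
end

section
/- The derivative formula of the quintic B-spline quasi-interpolant is exact on polynomials of degree 6: for every polynomial p of degree at most 6, every x ∈ ℝ and every h ≠ 0, (1/h)·[ −(13/5760)p(x−4h) − (1/320)p(x−3h) + (341/2880)p(x−2h) − (2069/2880)p(x−h) + (2069/2880)p(x+h) − (341/2880)p(x+2h) + (1/320)p(x+3h) + (13/5760)p(x+4h) ] = p'(x). -/
/-- The derivative formula of the quintic B-spline quasi-interpolant is exact on
polynomials of degree at most 6. -/
theorem qnbsqi_derivative_exact_on_degree_six (p : Polynomial ℝ) (hp : p.degree ≤ 6)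
    (x : ℝ) (h : ℝ) (hh : h ≠ 0) :
    (1 / h) * (-(13 / 5760 : ℝ) * p.eval (x - 4 * h) - (1 / 320) * p.eval (x - 3 * h)
        + (341 / 2880) * p.eval (x - 2 * h) - (2069 / 2880) * p.eval (x - h)
        + (2069 / 2880) * p.eval (x + h) - (341 / 2880) * p.eval (x + 2 * h)
        + (1 / 320) * p.eval (x + 3 * h) + (13 / 5760) * p.eval (x + 4 * h))
      = (Polynomial.derivative p).eval x := by
  have hn : p.natDegree < 7 := by
    have := Polynomial.natDegree_le_of_degree_le (n := 6) hp
    omega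
  have he : ∀ y : ℝ, p.eval y = p.coeff 0 + p.coeff 1 * y + p.coeff 2 * y ^ 2
      + p.coeff 3 * y ^ 3 + p.coeff 4 * y ^ 4 + p.coeff 5 * y ^ 5 + p.coeff 6 * y ^ 6 := by
    intro y
    rw [Polynomial.eval_eq_sum_range' hn]
    simp [Finset.sum_range_succ]
  have hd : (Polynomial.derivative p).eval x = p.coeff 1 + p.coeff 2 * 2 * x
      + p.coeff 3 * 3 * x ^ 2 + p.coeff 4 * 4 * x ^ 3 + p.coeff 5 * 5 * x ^ 4
      + p.coeff 6 * 6 * x ^ 5 := by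
    have hn' : (Polynomial.derivative p).natDegree < 6 := by
      have := Polynomial.natDegree_derivative_le p
      omega
    rw [Polynomial.eval_eq_sum_range' hn']
    simp only [Finset.sum_range_succ, Finset.sum_range_zero, Polynomial.coeff_derivative]
    norm_num
  rw [hd]
  simp only [he]
  rw [one_div, inv_mul_eq_iff_eq_mul₀ hh]
  ring
end

section
/- The nodal-value formula of the quintic B-spline quasi-interpolant is exact on quintic polynomials: for every polynomial p of degree at most 5, every x ∈ ℝ and every h ∈ ℝ, (13/28800)(p(x−4h) + p(x+4h)) + (113/14400)(p(x−3h) + p(x+3h)) − (101/1800)(p(x−2h) + p(x+2h)) + (2111/14400)(p(x−h) + p(x+h)) + (2311/2880)p(x) = p(x). -/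
/-- The nodal-value formula of the quintic B-spline quasi-interpolant is exact on
quintic polynomials. -/
theorem qnbsqi_nodal_exact_on_quintics (p : Polynomial ℝ) (hp : p.degree ≤ 5)
    (x h : ℝ) :
    (13 / 28800 : ℝ) * (p.eval (x - 4 * h) + p.eval (x + 4 * h))
      + (113 / 14400) * (p.eval (x - 3 * h) + p.eval (x + 3 * h))
      - (101 / 1800) * (p.eval (x - 2 * h) + p.eval (x + 2 * h))
      + (2111 / 14400) * (p.eval (x - h) + p.eval (x + h))
      + (2311 / 2880) * p.eval x = p.eval x := by
  have hn : p.natDegree < 6 :=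
    Nat.lt_succ_of_le (Polynomial.natDegree_le_of_degree_le hp)
  simp only [Polynomial.eval_eq_sum_range' hn, Finset.sum_range_succ, Finset.sum_range_zero]
  ring
end

section
/- The derivative formula of the quadric (degree 4) B-spline quasi-interpolant is exact on quartic polynomials: for every polynomial p of degree at most 4, every x ∈ ℝ and every h ≠ 0, (1/h)·[ −(47/55296)p(x−4h) − (101/9216)p(x−3h) + (3751/27648)p(x−2h) − (20323/27648)p(x−h) + (20323/27648)p(x+h) − (3751/27648)p(x+2h) + (101/9216)p(x+3h) + (47/55296)p(x+4h) ] = p'(x). -/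
/-- The derivative formula of the quadric (degree 4) B-spline quasi-interpolant is
exact on quartic polynomials. -/
theorem qdbsqi_derivative_exact_on_quartics (p : Polynomial ℝ) (hp : p.degree ≤ 4)
    (x : ℝ) (h : ℝ) (hh : h ≠ 0) :
    (1 / h) * (-(47 / 55296 : ℝ) * p.eval (x - 4 * h) - (101 / 9216) * p.eval (x - 3 * h)
        + (3751 / 27648) * p.eval (x - 2 * h) - (20323 / 27648) * p.eval (x - h)
        + (20323 / 27648) * p.eval (x + h) - (3751 / 27648) * p.eval (x + 2 * h)
        + (101 / 9216) * p.eval (x + 3 * h) + (47 / 55296) * p.eval (x + 4 * h))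
      = (Polynomial.derivative p).eval x := by
  have hn : p.natDegree < 5 := by
    have := Polynomial.natDegree_le_of_degree_le (n := 4) hp
    omega
  have hd : p.derivative.natDegree < 5 :=
    lt_of_le_of_lt ((Polynomial.natDegree_derivative_le p).trans (Nat.sub_le _ _)) hn
  have h5 : p.coeff 5 = 0 := Polynomial.coeff_eq_zero_of_natDegree_lt hn
  simp only [Polynomial.eval_eq_sum_range' hn, Polynomial.eval_eq_sum_range' hd,
    Finset.sum_range_succ, Finset.sum_range_zero, Polynomial.coeff_derivative]
  norm_num [h5]
  field_simp
  ring
end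

section
/- The QnBSQI first-derivative approximation is sixth-order accurate: if u : ℝ → ℝ is seven times continuously differentiable, then for every x ∈ ℝ, the function h ↦ (1/h)·[ −(13/5760)u(x−4h) − (1/320)u(x−3h) + (341/2880)u(x−2h) − (2069/2880)u(x−h) + (2069/2880)u(x+h) − (341/2880)u(x+2h) + (1/320)u(x+3h) + (13/5760)u(x+4h) ] − u'(x) is O(h⁶) as h → 0. -/
open Filter Topology Asymptotics

lemma taylor7_aux (u : ℝ → ℝ) (hu : ContDiff ℝ 7 u) (x c : ℝ) :
    (fun h : ℝ => u (x + c * h) - taylorWithinEval u 7 Set.univ x (x + c * h))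
      =O[𝓝[≠] (0 : ℝ)] fun h : ℝ => h ^ 7 := by
  have h1 := (taylor_isLittleO_univ (x₀ := x) (n := 7) hu).isBigO
  have h2 : Tendsto (fun h : ℝ => x + c * h) (𝓝[≠] 0) (𝓝 x) := by
    have : Continuous (fun h : ℝ => x + c * h) := by fun_prop
    simpa using (this.tendsto 0).mono_left nhdsWithin_le_nhds
  refine (h1.comp_tendsto h2).trans ?_
  refine IsBigO.of_bound (|c| ^ 7) (Eventually.of_forall fun h => ?_)
  simp [mul_pow]

/-- The QnBSQI first-derivative approximation is sixth-order accurate. -/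
theorem qnbsqi_derivative_sixth_order (u : ℝ → ℝ) (hu : ContDiff ℝ 7 u) (x : ℝ) :
    (fun h : ℝ => (1 / h) * (-(13 / 5760 : ℝ) * u (x - 4 * h) - (1 / 320) * u (x - 3 * h)
        + (341 / 2880) * u (x - 2 * h) - (2069 / 2880) * u (x - h)
        + (2069 / 2880) * u (x + h) - (341 / 2880) * u (x + 2 * h)
        + (1 / 320) * u (x + 3 * h) + (13 / 5760) * u (x + 4 * h)) - deriv u x)
      =O[𝓝[≠] (0 : ℝ)] fun h : ℝ => h ^ 6 := by
  have A := taylor7_aux u hu x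
  have key := ((((((((((A (-4)).const_mul_left (-(13 / 5760 : ℝ))).sub
    ((A (-3)).const_mul_left (1 / 320))).add
    ((A (-2)).const_mul_left (341 / 2880))).sub
    ((A (-1)).const_mul_left (2069 / 2880))).add
    ((A 1).const_mul_left (2069 / 2880))).sub
    ((A 2).const_mul_left (341 / 2880))).add
    ((A 3).const_mul_left (1 / 320))).add
    ((A 4).const_mul_left (13 / 5760)))).add
    ((isBigO_refl (fun h : ℝ => h ^ 7) (𝓝[≠] (0 : ℝ))).const_mul_left
      ((-(13 / 5760 : ℝ) * (-4) ^ 7 - (1 / 320) * (-3) ^ 7 + (341 / 2880) * (-2) ^ 7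
        - (2069 / 2880) * (-1) ^ 7 + (2069 / 2880) - (341 / 2880) * 2 ^ 7
        + (1 / 320) * 3 ^ 7 + (13 / 5760) * 4 ^ 7) * (iteratedDeriv 7 u x / 5040)))
  have key2 := (isBigO_refl (fun h : ℝ => 1 / h) (𝓝[≠] (0 : ℝ))).mul key
  refine key2.congr' ?_ ?_
  · filter_upwards [self_mem_nhdsWithin] with h hh
    have hh' : h ≠ 0 := hh
    simp only [taylor_within_apply, Finset.sum_range_succ, Finset.sum_range_zero,
      iteratedDerivWithin_univ, iteratedDeriv_one, iteratedDeriv_zero, smul_eq_mul,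
      add_sub_cancel_left, Nat.factorial]
    push_cast
    have e1 : x + -4 * h = x - 4 * h := by ring
    have e2 : x + -3 * h = x - 3 * h := by ring
    have e3 : x + -2 * h = x - 2 * h := by ring
    have e4 : x + -1 * h = x - h := by ring
    rw [e1, e2, e3, e4, one_mul]
    field_simp
    ring
  · filter_upwards [self_mem_nhdsWithin] with h hh
    have hh' : h ≠ 0 := hh
    field_simp
end

section
/- The quadratic BSQI first-derivative approximation is second-order accurate: if u : ℝ → ℝ is three times continuously differentiable, then for every x ∈ ℝ, the function h ↦ (1/h)·[ (1/16)u(x−2h) − (5/8)u(x−h) + (5/8)u(x+h) − (1/16)u(x+2h) ] − u'(x) is O(h²) as h → 0. -/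
open Filter Topology Asymptotics

/-- The quadratic BSQI first-derivative approximation is second-order accurate. -/
theorem qbsqi_derivative_second_order (u : ℝ → ℝ) (hu : ContDiff ℝ 3 u) (x : ℝ) :
    (fun h : ℝ => (1 / h) * ((1 / 16 : ℝ) * u (x - 2 * h) - (5 / 8) * u (x - h)
        + (5 / 8) * u (x + h) - (1 / 16) * u (x + 2 * h)) - deriv u x)
      =O[𝓝[≠] (0 : ℝ)] fun h : ℝ => h ^ 2 := by
  obtain ⟨a, b, hT⟩ : ∃ a b : ℝ, (fun y => u y - (u x + deriv u x * (y - x) + a * (y - x) ^ 2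
      + b * (y - x) ^ 3)) =O[𝓝 x] fun y => (y - x) ^ 3 := by
    have h3 : ContDiff ℝ ((3 : ℕ) : WithTop ℕ∞) u := by exact_mod_cast hu
    refine ⟨iteratedDeriv 2 u x / 2, iteratedDeriv 3 u x / 6, ?_⟩
    refine (taylor_isLittleO_univ (x₀ := x) h3).isBigO.congr_left ?_
    intro y
    simp only [taylorWithinEval_succ, taylor_within_zero_eval, iteratedDerivWithin_univ,
      smul_eq_mul, zero_add, iteratedDeriv_one, Nat.factorial]
    norm_num
    ring
  have key : ∀ c : ℝ, (fun h : ℝ => u (x + c * h) - (u x + deriv u x * (c * h) + a * (c * h) ^ 2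
      + b * (c * h) ^ 3)) =O[𝓝[≠] (0 : ℝ)] fun h : ℝ => h ^ 3 := by
    intro c
    have ht : Tendsto (fun h : ℝ => x + c * h) (𝓝[≠] 0) (𝓝 x) := by
      have : Continuous (fun h : ℝ => x + c * h) := by fun_prop
      simpa using (this.tendsto 0).mono_left nhdsWithin_le_nhds
    have h1 := hT.comp_tendsto ht
    simp only [Function.comp_def, add_sub_cancel_left] at h1
    refine h1.trans ?_
    simp only [mul_pow]
    exact (isBigO_refl _ _).const_mul_left _
  have hs := ((((key (-2)).const_mul_left (1 / 16)).sub ((key (-1)).const_mul_left (5 / 8))).add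
    ((key 1).const_mul_left (5 / 8))).sub ((key 2).const_mul_left (1 / 16))
  have hb := hs.add ((isBigO_refl (fun h : ℝ => h ^ 3) (𝓝[≠] 0)).const_mul_left (b / 4))
  have hm := (isBigO_refl (fun h : ℝ => 1 / h) (𝓝[≠] 0)).mul hb
  refine (hm.congr' ?_ ?_)
  · filter_upwards [self_mem_nhdsWithin] with h hh
    have hh : h ≠ 0 := hh
    have e1 : x + -2 * h = x - 2 * h := by ring
    have e2 : x + -1 * h = x - h := by ring
    rw [e1, e2, one_mul]
    field_simp
    ring
  · filter_upwards [self_mem_nhdsWithin] with h hh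
    have hh : h ≠ 0 := hh
    field_simp
end

section
/- The quadric (degree 4) BSQI first-derivative approximation is fourth-order accurate: if u : ℝ → ℝ is five times continuously differentiable, then for every x ∈ ℝ, the function h ↦ (1/h)·[ −(47/55296)u(x−4h) − (101/9216)u(x−3h) + (3751/27648)u(x−2h) − (20323/27648)u(x−h) + (20323/27648)u(x+h) − (3751/27648)u(x+2h) + (101/9216)u(x+3h) + (47/55296)u(x+4h) ] − u'(x) is O(h⁴) as h → 0. -/
open Filter Topology Asymptotics

lemma taylor_five_aux (u : ℝ → ℝ) (hu : ContDiff ℝ 5 u) (x : ℝ) :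
    ∃ a b c d e : ℝ, ∃ R : ℝ → ℝ, (∀ t, u (x + t) = a + deriv u x * t + b * t ^ 2 + c * t ^ 3
      + d * t ^ 4 + e * t ^ 5 + R t) ∧ R =O[𝓝 0] fun t => t ^ 5 := by
  have h := taylor_isLittleO_univ (f := u) (x₀ := x) (n := 5) (by exact_mod_cast hu)
  have ht : Tendsto (fun t : ℝ => x + t) (𝓝 0) (𝓝 x) := by
    have : Continuous (fun t : ℝ => x + t) := by fun_prop
    simpa using this.tendsto 0
  have h2 := (h.comp_tendsto ht).isBigO
  refine ⟨u x, iteratedDeriv 2 u x / 2, iteratedDeriv 3 u x / 6, iteratedDeriv 4 u x / 24,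
    iteratedDeriv 5 u x / 120, fun t => u (x + t) - taylorWithinEval u 5 Set.univ x (x + t),
    ?_, ?_⟩
  · intro t
    simp [taylor_within_apply, Finset.sum_range_succ, iteratedDerivWithin_univ, Nat.factorial,
      iteratedDeriv_zero, iteratedDeriv_one]
    ring
  · simpa [Function.comp_def] using h2

/-- The quadric (degree 4) BSQI first-derivative approximation is fourth-order
accurate. -/
theorem qdbsqi_derivative_fourth_order (u : ℝ → ℝ) (hu : ContDiff ℝ 5 u) (x : ℝ) :
    (fun h : ℝ => (1 / h) * (-(47 / 55296 : ℝ) * u (x - 4 * h) - (101 / 9216) * u (x - 3 * h)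
        + (3751 / 27648) * u (x - 2 * h) - (20323 / 27648) * u (x - h)
        + (20323 / 27648) * u (x + h) - (3751 / 27648) * u (x + 2 * h)
        + (101 / 9216) * u (x + 3 * h) + (47 / 55296) * u (x + 4 * h)) - deriv u x)
      =O[𝓝[≠] (0 : ℝ)] fun h : ℝ => h ^ 4 := by
  obtain ⟨a, b, c, d, e, R, hT, hR⟩ := taylor_five_aux u hu x
  have key : ∀ k : ℝ, (fun h : ℝ => R (k * h)) =O[𝓝[≠] (0 : ℝ)] fun h : ℝ => h ^ 5 := by
    intro k
    have ht : Tendsto (fun t : ℝ => k * t) (𝓝 0) (𝓝 0) := by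
      have : Continuous (fun t : ℝ => k * t) := by fun_prop
      simpa using this.tendsto 0
    have h1 := (hR.comp_tendsto ht).mono (nhdsWithin_le_nhds (s := {0}ᶜ))
    refine h1.trans ?_
    simp only [Function.comp_def, mul_pow]
    exact (isBigO_refl _ _).const_mul_left _
  have hS := ((((((((key (-4)).const_mul_left (-(47 / 55296))).add
    ((key (-3)).const_mul_left (-(101 / 9216)))).add
    ((key (-2)).const_mul_left (3751 / 27648))).add
    ((key (-1)).const_mul_left (-(20323 / 27648)))).add
    ((key 1).const_mul_left (20323 / 27648))).add
    ((key 2).const_mul_left (-(3751 / 27648)))).add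
    ((key 3).const_mul_left (101 / 9216))).add
    ((key 4).const_mul_left (47 / 55296))
  have hS2 := hS.add ((isBigO_refl (fun h : ℝ => h ^ 5) (𝓝[≠] (0 : ℝ))).const_mul_left
    (-(7 / 48) * e))
  have hS3 := (isBigO_refl (fun h : ℝ => 1 / h) (𝓝[≠] (0 : ℝ))).mul hS2
  refine hS3.congr' ?_ ?_
  · filter_upwards [self_mem_nhdsWithin] with h hh
    have hh : h ≠ 0 := hh
    have e1 : x - 4 * h = x + (-4) * h := by ring
    have e2 : x - 3 * h = x + (-3) * h := by ring
    have e3 : x - 2 * h = x + (-2) * h := by ring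
    have e4 : x - h = x + (-1) * h := by ring
    have e5 : x + h = x + 1 * h := by ring
    rw [e1, e2, e3, e4, e5]
    simp only [hT]
    generalize R (-4 * h) = r1
    generalize R (-3 * h) = r2
    generalize R (-2 * h) = r3
    generalize R (-1 * h) = r4
    generalize R (1 * h) = r5
    generalize R (2 * h) = r6
    generalize R (3 * h) = r7
    generalize R (4 * h) = r8
    field_simp
    ring
  · filter_upwards [self_mem_nhdsWithin] with h hh
    have hh : h ≠ 0 := hh
    field_simp
end
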